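/- arXiv:1010.3010 — 2 statements merged into one kernel-verified Lean document; each statement's English description precedes it below -/
import Mathlib

section
/- Let ψ : ℝ³ → ℝ be a smooth solution of the vorticity equation ζ_t + ψ_x ζ_y − ψ_y ζ_x = 0, where ζ := ψ_xx + ψ_yy, and let γ¹, γ² : ℝ → ℝ be arbitrary smooth functions. Then the function ψ̃(t,x,y) := ψ(t, x − γ¹(t), y − γ²(t)) − γ¹'(t)·y + γ²'(t)·x is also a smooth solution of the vorticity equation. -/
noncomputable section

/-- Partial derivative with respect to t. -/
def dT (f : ℝ × ℝ × ℝ → ℝ) (p : ℝ × ℝ × ℝ) : ℝ := fderiv ℝ f p (1, 0, 0)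
/-- Partial derivative with respect to x. -/
def dX (f : ℝ × ℝ × ℝ → ℝ) (p : ℝ × ℝ × ℝ) : ℝ := fderiv ℝ f p (0, 1, 0)
/-- Partial derivative with respect to y. -/
def dY (f : ℝ × ℝ × ℝ → ℝ) (p : ℝ × ℝ × ℝ) : ℝ := fderiv ℝ f p (0, 0, 1)

/-- The vorticity ζ := ψ_xx + ψ_yy. -/
def vort (ψ : ℝ × ℝ × ℝ → ℝ) : ℝ × ℝ × ℝ → ℝ := fun p => dX (dX ψ) p + dY (dY ψ) p

/-- ψ is a smooth solution of the vorticity equation ζ_t + ψ_x ζ_y − ψ_y ζ_x = 0. -/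
def IsVortSol (ψ : ℝ × ℝ × ℝ → ℝ) : Prop :=
  ContDiff ℝ (⊤ : ℕ∞) ψ ∧ ∀ p : ℝ × ℝ × ℝ,
    dT (vort ψ) p + dX ψ p * dY (vort ψ) p - dY ψ p * dX (vort ψ) p = 0

/-!
Seen from a frame moving along `γ`, every quantity is composed with the change of coordinates
`(t, z) ↦ (t, z - γ t)`. The chain rule adds the transport term `-γ'(t) · ∇` to the time
derivative and leaves spatial derivatives alone. Adding to `ψ` the stream function of the uniform
flow of velocity `γ'(t)` adds the opposite term to the advection and contributes no vorticity.
Hence both the vorticity and its material derivative are merely transported to the moving frame.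
-/

section MovingFrame

variable {𝕜 E F G : Type*} [NontriviallyNormedField 𝕜] [NormedAddCommGroup E] [NormedSpace 𝕜 E]
  [NormedAddCommGroup F] [NormedSpace 𝕜 F] [NormedAddCommGroup G] [NormedSpace 𝕜 G]

/-- Space-time coordinates `(t, z - γ t)`, relative to the trajectory `γ`, of the event
`p = (t, z)`. -/
def movingFrame (γ : 𝕜 → E) (p : 𝕜 × E) : 𝕜 × E := (p.1, p.2 - γ p.1)

theorem contDiff_movingFrame {n : WithTop ℕ∞} {γ : 𝕜 → E} (hγ : ContDiff 𝕜 n γ) :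
    ContDiff 𝕜 n (movingFrame γ) :=
  contDiff_fst.prodMk (contDiff_snd.sub (hγ.comp contDiff_fst))

theorem hasFDerivAt_movingFrame {γ : 𝕜 → E} {γ' : E} {p : 𝕜 × E} (hγ : HasDerivAt γ γ' p.1) :
    HasFDerivAt (movingFrame γ)
      ((ContinuousLinearMap.fst 𝕜 𝕜 E).prod
        (ContinuousLinearMap.snd 𝕜 𝕜 E - (ContinuousLinearMap.fst 𝕜 𝕜 E).smulRight γ')) p :=
  hasFDerivAt_fst.prodMk (hasFDerivAt_snd.sub
    (hγ.hasFDerivAt.comp p hasFDerivAt_fst))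

theorem fderiv_comp_movingFrame_apply {f : 𝕜 × E → F} {γ : 𝕜 → E} {p : 𝕜 × E}
    (hf : DifferentiableAt 𝕜 f (movingFrame γ p)) (hγ : DifferentiableAt 𝕜 γ p.1) (v : 𝕜 × E) :
    fderiv 𝕜 (f ∘ movingFrame γ) p v =
      fderiv 𝕜 f (movingFrame γ p) (v.1, v.2 - v.1 • deriv γ p.1) := by
  rw [(hf.hasFDerivAt.comp p (hasFDerivAt_movingFrame hγ.hasDerivAt)).fderiv]
  rfl

theorem fderiv_comp_movingFrame_apply_zero_fst {f : 𝕜 × E → F} {γ : 𝕜 → E} {p : 𝕜 × E}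
    (hf : DifferentiableAt 𝕜 f (movingFrame γ p)) (hγ : DifferentiableAt 𝕜 γ p.1) (w : E) :
    fderiv 𝕜 (f ∘ movingFrame γ) p (0, w) = fderiv 𝕜 f (movingFrame γ p) (0, w) := by
  rw [fderiv_comp_movingFrame_apply hf hγ, zero_smul, sub_zero]

theorem fderiv_comp_fst_apply_zero_fst {a : G → F} {p : G × E}
    (ha : DifferentiableAt 𝕜 a p.1) (w : E) : fderiv 𝕜 (a ∘ Prod.fst) p (0, w) = 0 := by
  rw [(ha.hasFDerivAt.comp p hasFDerivAt_fst).fderiv]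
  exact map_zero (fderiv 𝕜 a p.1)

end MovingFrame

section PartialDerivatives

variable {f g : ℝ × ℝ × ℝ → ℝ} {p : ℝ × ℝ × ℝ}

theorem contDiff_dX {m n : WithTop ℕ∞} (hf : ContDiff ℝ n f) (hmn : m + 1 ≤ n) :
    ContDiff ℝ m (dX f) :=
  (hf.fderiv_right hmn).clm_apply contDiff_const

theorem contDiff_dY {m n : WithTop ℕ∞} (hf : ContDiff ℝ n f) (hmn : m + 1 ≤ n) :
    ContDiff ℝ m (dY f) :=
  (hf.fderiv_right hmn).clm_apply contDiff_const

theorem dX_add (hf : DifferentiableAt ℝ f p) (hg : DifferentiableAt ℝ g p) :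
    dX (f + g) p = dX f p + dX g p := by
  simp only [dX, fderiv_add hf hg, add_apply]

theorem dY_add (hf : DifferentiableAt ℝ f p) (hg : DifferentiableAt ℝ g p) :
    dY (f + g) p = dY f p + dY g p := by
  simp only [dY, fderiv_add hf hg, add_apply]

theorem contDiff_vort {m n : WithTop ℕ∞} (hf : ContDiff ℝ n f) (hmn : m + 1 + 1 ≤ n) :
    ContDiff ℝ m (vort f) :=
  (contDiff_dX (contDiff_dX hf hmn) le_rfl).add (contDiff_dY (contDiff_dY hf hmn) le_rfl)

theorem vort_add (hf : ContDiff ℝ 2 f) (hg : ContDiff ℝ 2 g) :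
    vort (f + g) = vort f + vort g := by
  have hf₁ := hf.differentiable two_ne_zero
  have hg₁ := hg.differentiable two_ne_zero
  have hX : dX (f + g) = dX f + dX g := funext fun p => dX_add (hf₁ p) (hg₁ p)
  have hY : dY (f + g) = dY f + dY g := funext fun p => dY_add (hf₁ p) (hg₁ p)
  have h12 : (1 : WithTop ℕ∞) + 1 ≤ 2 := one_add_one_eq_two.le
  funext p
  simp only [vort, hX, hY, Pi.add_apply]
  rw [dX_add ((contDiff_dX hf h12).differentiable one_ne_zero p)
      ((contDiff_dX hg h12).differentiable one_ne_zero p),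
    dY_add ((contDiff_dY hf h12).differentiable one_ne_zero p)
      ((contDiff_dY hg h12).differentiable one_ne_zero p)]
  ring

variable {γ : ℝ → ℝ × ℝ}

theorem dX_comp_movingFrame (hf : DifferentiableAt ℝ f (movingFrame γ p))
    (hγ : DifferentiableAt ℝ γ p.1) :
    dX (f ∘ movingFrame γ) p = dX f (movingFrame γ p) :=
  fderiv_comp_movingFrame_apply_zero_fst hf hγ _

theorem dY_comp_movingFrame (hf : DifferentiableAt ℝ f (movingFrame γ p))
    (hγ : DifferentiableAt ℝ γ p.1) :
    dY (f ∘ movingFrame γ) p = dY f (movingFrame γ p) :=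
  fderiv_comp_movingFrame_apply_zero_fst hf hγ _

theorem dT_comp_movingFrame (hf : DifferentiableAt ℝ f (movingFrame γ p))
    (hγ : DifferentiableAt ℝ γ p.1) :
    dT (f ∘ movingFrame γ) p = dT f (movingFrame γ p)
      - (deriv γ p.1).1 * dX f (movingFrame γ p) - (deriv γ p.1).2 * dY f (movingFrame γ p) := by
  have hv : ((1, 0 - (1 : ℝ) • deriv γ p.1) : ℝ × ℝ × ℝ) =
      (1, 0, 0) - (deriv γ p.1).1 • (0, 1, 0) - (deriv γ p.1).2 • (0, 0, 1) := by
    ext <;> simp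
  calc dT (f ∘ movingFrame γ) p
      = fderiv ℝ f (movingFrame γ p) (1, 0 - (1 : ℝ) • deriv γ p.1) :=
        fderiv_comp_movingFrame_apply hf hγ _
    _ = _ := by rw [hv, map_sub, map_sub, map_smul, map_smul]; rfl

theorem vort_comp_movingFrame (hf : ContDiff ℝ 2 f) (hγ : Differentiable ℝ γ) :
    vort (f ∘ movingFrame γ) = vort f ∘ movingFrame γ := by
  have hf₁ := hf.differentiable two_ne_zero
  have hX : dX (f ∘ movingFrame γ) = dX f ∘ movingFrame γ :=
    funext fun p => dX_comp_movingFrame (hf₁ _) (hγ _)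
  have hY : dY (f ∘ movingFrame γ) = dY f ∘ movingFrame γ :=
    funext fun p => dY_comp_movingFrame (hf₁ _) (hγ _)
  have h12 : (1 : WithTop ℕ∞) + 1 ≤ 2 := one_add_one_eq_two.le
  funext p
  simp only [vort, hX, hY, Function.comp_apply]
  rw [dX_comp_movingFrame ((contDiff_dX hf h12).differentiable one_ne_zero _) (hγ _),
    dY_comp_movingFrame ((contDiff_dY hf h12).differentiable one_ne_zero _) (hγ _)]

end PartialDerivatives

section UniformStream

variable {U : ℝ → ℝ × ℝ} {p : ℝ × ℝ × ℝ}

/-- The stream function of the spatially uniform flow of velocity `U t`, in the sign convention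
of `IsVortSol`: the velocity of a stream function `ψ` is `(-ψ_y, ψ_x)`. -/
def uniformStream (U : ℝ → ℝ × ℝ) (p : ℝ × ℝ × ℝ) : ℝ := (U p.1).2 * p.2.1 - (U p.1).1 * p.2.2

theorem contDiff_uniformStream {n : WithTop ℕ∞} (hU : ContDiff ℝ n U) :
    ContDiff ℝ n (uniformStream U) := by
  unfold uniformStream
  fun_prop

theorem differentiableAt_uniformStream (hU : DifferentiableAt ℝ U p.1) :
    DifferentiableAt ℝ (uniformStream U) p := by
  unfold uniformStream
  fun_prop

theorem fderiv_uniformStream_apply_zero_fst (hU : DifferentiableAt ℝ U p.1) (w : ℝ × ℝ) :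
    fderiv ℝ (uniformStream U) p (0, w) = (U p.1).2 * w.1 - (U p.1).1 * w.2 := by
  have hU₁ := hU.fst.hasFDerivAt.comp p hasFDerivAt_fst
  have hU₂ := hU.snd.hasFDerivAt.comp p hasFDerivAt_fst
  have h : HasFDerivAt (uniformStream U) _ p :=
    (hU₂.mul hasFDerivAt_snd.fst).sub (hU₁.mul hasFDerivAt_snd.snd)
  rw [h.fderiv]
  simp

theorem dX_uniformStream (hU : DifferentiableAt ℝ U p.1) :
    dX (uniformStream U) p = (U p.1).2 := by
  simp [dX, fderiv_uniformStream_apply_zero_fst hU]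

theorem dY_uniformStream (hU : DifferentiableAt ℝ U p.1) :
    dY (uniformStream U) p = -(U p.1).1 := by
  simp [dY, fderiv_uniformStream_apply_zero_fst hU]

theorem vort_uniformStream (hU : Differentiable ℝ U) : vort (uniformStream U) = 0 := by
  have hX : dX (uniformStream U) = fun p => (U p.1).2 := funext fun p => dX_uniformStream (hU _)
  have hY : dY (uniformStream U) = fun p => -(U p.1).1 := funext fun p => dY_uniformStream (hU _)
  funext p
  have hXX : dX (dX (uniformStream U)) p = 0 := by
    rw [hX]
    exact fderiv_comp_fst_apply_zero_fst (hU p.1).snd (1, 0)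
  have hYY : dY (dY (uniformStream U)) p = 0 := by
    rw [hY]
    exact fderiv_comp_fst_apply_zero_fst (hU p.1).fst.neg (0, 1)
  rw [vort, hXX, hYY, add_zero, Pi.zero_apply]

end UniformStream

section GalileanBoost

variable {ψ f : ℝ × ℝ × ℝ → ℝ} {γ : ℝ → ℝ × ℝ} {p : ℝ × ℝ × ℝ}

/-- The material derivative `f_t + {ψ, f}` of `f` along the flow with stream function `ψ`. -/
def materialDeriv (ψ f : ℝ × ℝ × ℝ → ℝ) (p : ℝ × ℝ × ℝ) : ℝ :=
  dT f p + dX ψ p * dY f p - dY ψ p * dX f p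

/-- The generalized Galilean transform of a stream function: the flow `ψ` carried along the
trajectory `γ`, together with the uniform velocity `γ'` of that motion. -/
def galileanBoost (γ : ℝ → ℝ × ℝ) (ψ : ℝ × ℝ × ℝ → ℝ) : ℝ × ℝ × ℝ → ℝ :=
  ψ ∘ movingFrame γ + uniformStream (deriv γ)

theorem galileanBoost_apply (γ : ℝ → ℝ × ℝ) (ψ : ℝ × ℝ × ℝ → ℝ) (p : ℝ × ℝ × ℝ) :
    galileanBoost γ ψ p = ψ (p.1, p.2.1 - (γ p.1).1, p.2.2 - (γ p.1).2)
      - (deriv γ p.1).1 * p.2.2 + (deriv γ p.1).2 * p.2.1 := by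
  change ψ (movingFrame γ p) + uniformStream (deriv γ) p = ψ (movingFrame γ p) - _ + _
  rw [uniformStream]
  ring

theorem contDiff_galileanBoost {n : WithTop ℕ∞} (hψ : ContDiff ℝ n ψ)
    (hγ : ContDiff ℝ (n + 1) γ) : ContDiff ℝ n (galileanBoost γ ψ) :=
  (hψ.comp (contDiff_movingFrame (hγ.of_le le_self_add))).add
    (contDiff_uniformStream (contDiff_succ_iff_deriv.1 hγ).2.2)

theorem vort_galileanBoost (hψ : ContDiff ℝ 2 ψ) (hγ : ContDiff ℝ 3 γ) :
    vort (galileanBoost γ ψ) = vort ψ ∘ movingFrame γ := by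
  rw [← two_add_one_eq_three] at hγ
  have hγ₂ : ContDiff ℝ 2 γ := hγ.of_le le_self_add
  have hγ' : ContDiff ℝ 2 (deriv γ) := (contDiff_succ_iff_deriv.1 hγ).2.2
  rw [galileanBoost,
    vort_add (hψ.comp (contDiff_movingFrame hγ₂)) (contDiff_uniformStream hγ'),
    vort_comp_movingFrame hψ (hγ₂.differentiable two_ne_zero),
    vort_uniformStream (hγ'.differentiable two_ne_zero), add_zero]

theorem dX_galileanBoost (hψ : DifferentiableAt ℝ ψ (movingFrame γ p))
    (hγ : DifferentiableAt ℝ γ p.1) (hγ' : DifferentiableAt ℝ (deriv γ) p.1) :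
    dX (galileanBoost γ ψ) p = dX ψ (movingFrame γ p) + (deriv γ p.1).2 := by
  rw [galileanBoost, dX_add (hψ.comp p (hasFDerivAt_movingFrame hγ.hasDerivAt).differentiableAt)
    (differentiableAt_uniformStream hγ'), dX_comp_movingFrame hψ hγ, dX_uniformStream hγ']

theorem dY_galileanBoost (hψ : DifferentiableAt ℝ ψ (movingFrame γ p))
    (hγ : DifferentiableAt ℝ γ p.1) (hγ' : DifferentiableAt ℝ (deriv γ) p.1) :
    dY (galileanBoost γ ψ) p = dY ψ (movingFrame γ p) - (deriv γ p.1).1 := by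
  rw [galileanBoost, dY_add (hψ.comp p (hasFDerivAt_movingFrame hγ.hasDerivAt).differentiableAt)
    (differentiableAt_uniformStream hγ'), dY_comp_movingFrame hψ hγ, dY_uniformStream hγ',
    sub_eq_add_neg]

theorem materialDeriv_galileanBoost_comp_movingFrame
    (hψ : DifferentiableAt ℝ ψ (movingFrame γ p)) (hf : DifferentiableAt ℝ f (movingFrame γ p))
    (hγ : DifferentiableAt ℝ γ p.1) (hγ' : DifferentiableAt ℝ (deriv γ) p.1) :
    materialDeriv (galileanBoost γ ψ) (f ∘ movingFrame γ) p =
      materialDeriv ψ f (movingFrame γ p) := by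
  rw [materialDeriv, dT_comp_movingFrame hf hγ, dX_galileanBoost hψ hγ hγ',
    dY_comp_movingFrame hf hγ, dY_galileanBoost hψ hγ hγ', dX_comp_movingFrame hf hγ, materialDeriv]
  ring

theorem isVortSol_galileanBoost (h : IsVortSol ψ) (hγ : ContDiff ℝ (⊤ : ℕ∞) γ) :
    IsVortSol (galileanBoost γ ψ) := by
  obtain ⟨hψ, heq⟩ := h
  have hζ : ContDiff ℝ (⊤ : ℕ∞) (vort ψ) := contDiff_vort hψ le_rfl
  have hγ' : ContDiff ℝ (⊤ : ℕ∞) (deriv γ) := (contDiff_infty_iff_deriv.1 hγ).2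
  refine ⟨contDiff_galileanBoost hψ hγ, fun p => ?_⟩
  change materialDeriv (galileanBoost γ ψ) (vort (galileanBoost γ ψ)) p = 0
  rw [vort_galileanBoost (contDiff_infty.1 hψ 2) (contDiff_infty.1 hγ 3),
    materialDeriv_galileanBoost_comp_movingFrame (hψ.differentiable (by simp) _)
      (hζ.differentiable (by simp) _) (hγ.differentiable (by simp) _)
      (hγ'.differentiable (by simp) _)]
  exact heq (movingFrame γ p)

end GalileanBoost

theorem generalized_Galilean_symmetry_of_vorticity_equation
    (ψ : ℝ × ℝ × ℝ → ℝ) (h : IsVortSol ψ)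
    (γ1 γ2 : ℝ → ℝ) (hγ1 : ContDiff ℝ (⊤ : ℕ∞) γ1) (hγ2 : ContDiff ℝ (⊤ : ℕ∞) γ2) :
    IsVortSol (fun p =>
      ψ (p.1, p.2.1 - γ1 p.1, p.2.2 - γ2 p.1)
      - deriv γ1 p.1 * p.2.2 + deriv γ2 p.1 * p.2.1) := by
  let γ : ℝ → ℝ × ℝ := fun t => (γ1 t, γ2 t)
  have hγ : ContDiff ℝ (⊤ : ℕ∞) γ := hγ1.prodMk hγ2
  have hγ' (t : ℝ) : deriv γ t = (deriv γ1 t, deriv γ2 t) :=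
    ((hγ1.differentiable (by simp) t).hasDerivAt.prodMk
      (hγ2.differentiable (by simp) t).hasDerivAt).deriv
  convert isVortSol_galileanBoost h hγ using 1
  funext p
  rw [galileanBoost_apply, hγ']
end
end

section
/- Let a, b, c : ℝ³ → ℝ be smooth functions of the variables (t, ζ₁, ζ₂) satisfying b_{ζ₁ζ₂} = a_{ζ₂ζ₂} + c_{ζ₁ζ₁}. Then there exist smooth functions f¹, f² : ℝ³ → ℝ of (t, ζ₁, ζ₂) such that a = f¹_{ζ₁}, b = f¹_{ζ₂} + f²_{ζ₁}, and c = f²_{ζ₂}. -/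
/-!
Statement 9: if smooth a, b, c of (t, ζ₁, ζ₂) satisfy b_{ζ₁ζ₂} = a_{ζ₂ζ₂} + c_{ζ₁ζ₁},
then there exist smooth f¹, f² of (t, ζ₁, ζ₂) with a = f¹_{ζ₁}, b = f¹_{ζ₂} + f²_{ζ₁},
c = f²_{ζ₂}.
-/

noncomputable section

/-- Directional (partial) derivative on ℝ³ with coordinates (t, ζ₁, ζ₂). -/
def pd3 (v : ℝ × ℝ × ℝ) (f : ℝ × ℝ × ℝ → ℝ) (p : ℝ × ℝ × ℝ) : ℝ := fderiv ℝ f p v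

/-!
The hypothesis says that `(a_{ζ₂}, b_{ζ₂} - c_{ζ₁})` is a closed 1-form in `(ζ₁, ζ₂)`, with `t` as a
parameter. If `u` is a primitive, then `(a, u)` and `(b - u, c)` are closed as well, and their
primitives are `f¹` and `f²`. So the theorem is the Poincaré lemma with smooth dependence on a
parameter, applied three times.
-/

open scoped Interval Topology

variable {E V F : Type*} [NormedAddCommGroup E] [NormedSpace ℝ E]
  [NormedAddCommGroup V] [NormedSpace ℝ V] [NormedAddCommGroup F] [NormedSpace ℝ F]

section ParametricIntegral

theorem hasFDerivAt_intervalIntegral_of_continuous {f : E → ℝ → F} {f' : E → ℝ → E →L[ℝ] F}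
    (hf : ∀ x, Continuous (f x)) (hf' : Continuous f'.uncurry)
    (hff' : ∀ x s, HasFDerivAt (f · s) (f' x s) x) (a b : ℝ) (x₀ : E) :
    HasFDerivAt (fun x ↦ ∫ s in a..b, f x s) (∫ s in a..b, f' x₀ s) x₀ := by
  have hf'x₀ : Continuous (f' x₀) := hf'.comp (.prodMk_right x₀)
  obtain ⟨C, hC⟩ := isCompact_uIcc.exists_bound_of_continuousOn (s := [[a, b]]) hf'x₀.continuousOn
  have hbound : ∀ᶠ x in 𝓝 x₀, ∀ s ∈ [[a, b]], ‖f' x s‖ < C + 1 :=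
    isCompact_uIcc.eventually_forall_of_forall_eventually fun s hs ↦
      hf'.norm.continuousAt.eventually_lt_const ((hC s hs).trans_lt (lt_add_one C))
  exact intervalIntegral.hasFDerivAt_integral_of_dominated_of_fderiv_le hbound
    (.of_forall fun x ↦ (hf x).aestronglyMeasurable) ((hf x₀).intervalIntegrable a b)
    hf'x₀.aestronglyMeasurable
    (.of_forall fun s hs x hx ↦ (hx s (Set.uIoc_subset_uIcc hs)).le)
    intervalIntegrable_const (.of_forall fun s _ x _ ↦ hff' x s)

theorem hasFDerivAt_iteratedFDeriv_comp_inl {n : ℕ∞} {f : E × V → F} (hf : ContDiff ℝ n f)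
    {m : ℕ} (hm : m < n) (x : E) (y : V) :
    HasFDerivAt
      (fun x ↦ (iteratedFDeriv ℝ m f (x, y)).compContinuousLinearMap fun _ ↦ .inl ℝ E V)
      ((iteratedFDeriv ℝ (m + 1) f (x, y)).compContinuousLinearMap fun _ ↦ .inl ℝ E V).curryLeft
      x := by
  have hD : HasFDerivAt (iteratedFDeriv ℝ m f) _ (x, y) :=
    (hf.differentiable_iteratedFDeriv (by exact_mod_cast hm) (x, y)).hasFDerivAt
  exact (ContinuousMultilinearMap.compContinuousLinearMapL
    (fun _ : Fin m ↦ ContinuousLinearMap.inl ℝ E V)).hasFDerivAt.comp x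
      (hD.comp x (hasFDerivAt_prodMk_left (𝕜 := ℝ) x y))

theorem continuousLinearEquiv_intervalIntegral_comp_comm (L : E ≃L[ℝ] F) (φ : ℝ → E) (a b : ℝ) :
    ∫ s in a..b, L (φ s) = L (∫ s in a..b, φ s) := by
  simp only [intervalIntegral, L.integral_comp_comm, map_sub]

theorem contDiff_intervalIntegral {n : ℕ∞} {f : E × ℝ → F} (hf : ContDiff ℝ n f) (a b : ℝ) :
    ContDiff ℝ n fun x ↦ ∫ s in a..b, f (x, s) := by
  let D (m : ℕ) (x : E) (s : ℝ) : E [×m]→L[ℝ] F :=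
    (iteratedFDeriv ℝ m f (x, s)).compContinuousLinearMap fun _ ↦ .inl ℝ E ℝ
  have hD {m : ℕ} (hm : m ≤ n) : Continuous (D m).uncurry :=
    (ContinuousMultilinearMap.compContinuousLinearMapL _).continuous.comp
      (hf.continuous_iteratedFDeriv (by exact_mod_cast hm))
  refine HasFTaylorSeriesUpTo.contDiff (f' := fun x m ↦ ∫ s in a..b, D m x s) ⟨?_, ?_, ?_⟩
  · intro x
    exact (continuousLinearEquiv_intervalIntegral_comp_comm
      (continuousMultilinearCurryFin0 ℝ E F).toContinuousLinearEquiv (D 0 x) a b).symm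
  · intro m hm x
    have hm : m < n := by exact_mod_cast hm
    let curryLeft :=
      (continuousMultilinearCurryLeftEquiv ℝ (fun _ : Fin (m + 1) ↦ E) F).toContinuousLinearEquiv
    have hderiv : HasFDerivAt (fun x ↦ ∫ s in a..b, D m x s)
        (∫ s in a..b, curryLeft (D (m + 1) x s)) x :=
      hasFDerivAt_intervalIntegral_of_continuous (f' := fun x s ↦ curryLeft (D (m + 1) x s))
        (fun x ↦ (hD hm.le).comp (.prodMk_right x))
        (curryLeft.continuous.comp (hD (Order.add_one_le_of_lt hm)))
        (fun x s ↦ hasFDerivAt_iteratedFDeriv_comp_inl hf hm x s) a b x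
    rw [continuousLinearEquiv_intervalIntegral_comp_comm] at hderiv
    exact hderiv
  · intro m hm
    exact intervalIntegral.continuous_parametric_intervalIntegral_of_continuous'
      (hD (by exact_mod_cast hm)) a b

end ParametricIntegral

section PoincareLemma

variable [CompleteSpace F] {n : ℕ∞}

theorem exists_contDiff_fiberwise_primitive (hn : n ≠ 0) {ω : E × V → V →L[ℝ] F}
    (hω : ContDiff ℝ n ω)
    (hclosed : ∀ p u v, fderiv ℝ ω p (0, u) v = fderiv ℝ ω p (0, v) u) :
    ∃ f : E × V → F, ContDiff ℝ n f ∧ ∀ p v, fderiv ℝ f p (0, v) = ω p v := by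
  have hn : (n : WithTop ℕ∞) ≠ 0 := by exact_mod_cast hn
  let f (p : E × V) : F := ∫ᶜ x in .segment 0 p.2, ω (p.1, x)
  have hf : ContDiff ℝ n f := by
    simp only [f, curveIntegral_segment, AffineMap.lineMap_apply_module', sub_zero, add_zero]
    refine contDiff_intervalIntegral
      (f := fun q : (E × V) × ℝ ↦ ω (q.1.1, q.2 • q.1.2) q.1.2) ?_ 0 1
    exact (hω.comp (by fun_prop)).clm_apply (by fun_prop)
  refine ⟨f, hf, fun ⟨t, x⟩ v ↦ ?_⟩
  have hωt (y : V) :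
      HasFDerivAt (fun y ↦ ω (t, y)) ((fderiv ℝ ω (t, y)).comp (.inr ℝ E V)) y :=
    (hω.differentiable hn (t, y)).hasFDerivAt.comp y (hasFDerivAt_prodMk_right t y)
  have hft : HasFDerivAt (fun y ↦ f (t, y)) (ω (t, x)) x :=
    (convex_univ.hasFDerivWithinAt_curveIntegral_segment_of_hasFDerivWithinAt_symmetric
      (fun y _ ↦ (hωt y).hasFDerivWithinAt) (fun y _ u _ v _ ↦ hclosed (t, y) u v)
      (Set.mem_univ 0) (Set.mem_univ x)).hasFDerivAt Filter.univ_mem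
  have hft' : HasFDerivAt (fun y ↦ f (t, y)) ((fderiv ℝ f (t, x)).comp (.inr ℝ E V)) x :=
    (hf.differentiable hn (t, x)).hasFDerivAt.comp x (hasFDerivAt_prodMk_right t x)
  exact congr($(hft'.unique hft) v)

end PoincareLemma

/-- The directional derivative `∂ᵥ f`, extending `pd3` to functions between arbitrary normed spaces.
It is taken from the Fréchet derivative, so it is `0` where `f` is not differentiable, even if the
derivative along the line through `p` exists. -/
def dirDeriv (v : E) (f : E → F) (p : E) : F := fderiv ℝ f p v

section DirDeriv

theorem contDiff_dirDeriv {n : WithTop ℕ∞} {f : E → F} (hf : ContDiff ℝ (n + 1) f) (v : E) :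
    ContDiff ℝ n (dirDeriv v f) :=
  (hf.fderiv_right le_rfl).clm_apply contDiff_const

theorem dirDeriv_sub {f g : E → F} {p : E} (hf : DifferentiableAt ℝ f p)
    (hg : DifferentiableAt ℝ g p) (v : E) :
    dirDeriv v (f - g) p = dirDeriv v f p - dirDeriv v g p := by
  simp only [dirDeriv, fderiv_sub hf hg, sub_apply]

theorem dirDeriv_zero_prodMk (f : E × ℝ × ℝ → F) (p : E × ℝ × ℝ) (v : ℝ × ℝ) :
    dirDeriv (0, v) f p = v.1 • dirDeriv (0, 1, 0) f p + v.2 • dirDeriv (0, 0, 1) f p := by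
  simp only [dirDeriv, ← map_smul, ← map_add]
  simp

theorem dirDeriv_dirDeriv {f : E → F} {p : E} (hf : DifferentiableAt ℝ (fderiv ℝ f) p) (v w : E) :
    dirDeriv v (dirDeriv w f) p = fderiv ℝ (fderiv ℝ f) p v w :=
  congr($((hf.hasFDerivAt.clm_apply (hasFDerivAt_const w p)).fderiv) v).trans (by simp)

theorem dirDeriv_comm {f : E → F} {p : E} (hf : ContDiffAt ℝ 2 f p) (v w : E) :
    dirDeriv v (dirDeriv w f) p = dirDeriv w (dirDeriv v f) p := by
  have hf' : DifferentiableAt ℝ (fderiv ℝ f) p :=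
    (hf.fderiv_right (m := 1) (by norm_num)).differentiableAt one_ne_zero
  rw [dirDeriv_dirDeriv hf', dirDeriv_dirDeriv hf']
  exact hf.isSymmSndFDerivAt (by simp) v w

end DirDeriv

section DivergenceRepresentation

variable [CompleteSpace F] {n : ℕ∞}

theorem exists_contDiff_dirDeriv_eq_of_closed (hn : n ≠ 0) {g h : E × ℝ × ℝ → F}
    (hg : ContDiff ℝ n g) (hh : ContDiff ℝ n h)
    (hclosed : dirDeriv (0, 0, 1) g = dirDeriv (0, 1, 0) h) :
    ∃ f : E × ℝ × ℝ → F,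
      ContDiff ℝ n f ∧ dirDeriv (0, 1, 0) f = g ∧ dirDeriv (0, 0, 1) f = h := by
  have hn' : (n : WithTop ℕ∞) ≠ 0 := by exact_mod_cast hn
  let dx := ContinuousLinearMap.smulRightL ℝ (ℝ × ℝ) F (.fst ℝ ℝ ℝ)
  let dy := ContinuousLinearMap.smulRightL ℝ (ℝ × ℝ) F (.snd ℝ ℝ ℝ)
  let ω (p : E × ℝ × ℝ) : ℝ × ℝ →L[ℝ] F := dx (g p) + dy (h p)
  have hω : ContDiff ℝ n ω := (dx.contDiff.comp hg).add (dy.contDiff.comp hh)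
  have hfderiv (p w v) :
      fderiv ℝ ω p w v = v.1 • dirDeriv w g p + v.2 • dirDeriv w h p :=
    congr($(((dx.hasFDerivAt.comp p (hg.differentiable hn' p).hasFDerivAt).add
      (dy.hasFDerivAt.comp p (hh.differentiable hn' p).hasFDerivAt)).fderiv) w v)
  obtain ⟨f, hf, hfω⟩ := exists_contDiff_fiberwise_primitive hn hω fun p u v ↦ by
    simp only [hfderiv, dirDeriv_zero_prodMk _ p u, dirDeriv_zero_prodMk _ p v, hclosed]
    module
  refine ⟨f, hf, ?_, ?_⟩ <;> ext p <;> simp [dirDeriv, hfω, ω, dx, dy]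

theorem second_order_divergence_representation_general (hn : n ≠ 0) {a b c : E × ℝ × ℝ → F}
    (ha : ContDiff ℝ (n + 1) a) (hb : ContDiff ℝ (n + 1) b) (hc : ContDiff ℝ (n + 1) c)
    (hcompat : ∀ p,
      dirDeriv (0, 0, 1) (dirDeriv (0, 1, 0) b) p
        = dirDeriv (0, 0, 1) (dirDeriv (0, 0, 1) a) p
          + dirDeriv (0, 1, 0) (dirDeriv (0, 1, 0) c) p) :
    ∃ f1 f2 : E × ℝ × ℝ → F, ContDiff ℝ n f1 ∧ ContDiff ℝ n f2 ∧
      ∀ p,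
        a p = dirDeriv (0, 1, 0) f1 p ∧
        b p = dirDeriv (0, 0, 1) f1 p + dirDeriv (0, 1, 0) f2 p ∧
        c p = dirDeriv (0, 0, 1) f2 p := by
  have hn' : (n : WithTop ℕ∞) ≠ 0 := by exact_mod_cast hn
  have hn₂ : (2 : WithTop ℕ∞) ≤ n + 1 := by
    rw [← one_add_one_eq_two]
    gcongr
    exact_mod_cast Order.one_le_iff_ne_zero.2 hn
  have hb₂ : ContDiff ℝ n (dirDeriv (0, 0, 1) b) := contDiff_dirDeriv hb _
  have hc₁ : ContDiff ℝ n (dirDeriv (0, 1, 0) c) := contDiff_dirDeriv hc _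
  have hclosed : dirDeriv (0, 0, 1) (dirDeriv (0, 0, 1) a) =
      dirDeriv (0, 1, 0) (dirDeriv (0, 0, 1) b - dirDeriv (0, 1, 0) c) := by
    ext p
    rw [dirDeriv_sub (hb₂.differentiable hn' p) (hc₁.differentiable hn' p), eq_sub_iff_add_eq,
      ← hcompat, dirDeriv_comm (hb.of_le hn₂).contDiffAt]
  obtain ⟨u, hu, hu₁, hu₂⟩ :=
    exists_contDiff_dirDeriv_eq_of_closed hn (contDiff_dirDeriv ha _) (hb₂.sub hc₁) hclosed
  have hbu : dirDeriv (0, 0, 1) (b - u) = dirDeriv (0, 1, 0) c := by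
    ext p
    rw [dirDeriv_sub (hb.differentiable (by simp) p) (hu.differentiable hn' p), hu₂]
    exact sub_sub_cancel _ _
  obtain ⟨f₁, hf₁, hf₁₁, hf₁₂⟩ :=
    exists_contDiff_dirDeriv_eq_of_closed hn (ha.of_le le_self_add) hu hu₁.symm
  obtain ⟨f₂, hf₂, hf₂₁, hf₂₂⟩ := exists_contDiff_dirDeriv_eq_of_closed hn
    ((hb.of_le le_self_add).sub hu) (hc.of_le le_self_add) hbu
  refine ⟨f₁, f₂, hf₁, hf₂, fun p ↦ ?_⟩
  simp [hf₁₁, hf₁₂, hf₂₁, hf₂₂]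

end DivergenceRepresentation

theorem second_order_divergence_representation
    (a b c : ℝ × ℝ × ℝ → ℝ)
    (ha : ContDiff ℝ (⊤ : ℕ∞) a) (hb : ContDiff ℝ (⊤ : ℕ∞) b) (hc : ContDiff ℝ (⊤ : ℕ∞) c)
    (hcompat : ∀ p : ℝ × ℝ × ℝ,
      pd3 (0, 0, 1) (pd3 (0, 1, 0) b) p
        = pd3 (0, 0, 1) (pd3 (0, 0, 1) a) p + pd3 (0, 1, 0) (pd3 (0, 1, 0) c) p) :
    ∃ f1 f2 : ℝ × ℝ × ℝ → ℝ, ContDiff ℝ (⊤ : ℕ∞) f1 ∧ ContDiff ℝ (⊤ : ℕ∞) f2 ∧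
      ∀ p : ℝ × ℝ × ℝ,
        a p = pd3 (0, 1, 0) f1 p ∧
        b p = pd3 (0, 0, 1) f1 p + pd3 (0, 1, 0) f2 p ∧
        c p = pd3 (0, 0, 1) f2 p :=
  second_order_divergence_representation_general ENat.top_ne_zero ha hb hc hcompat
end
end
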